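/- If G is algorithmically stackable over A, with normal form set C and extended stacking map Φ for which S_Φ is computable, then the normal form function is computable: there exists a computable function f : List A → List A such that f(w) = y_{π(w)} (the unique word of C representing π(w)) for every word w. -/

import Mathlib

namespace Stk

variable {G : Type*} [Group G] {A : Type*}

/-- Evaluation of a word over the generating alphabet in the group. -/
def eval (ρ : A → G) (w : List A) : G := (w.map ρ).prod

/-- `C` is a set of normal forms: evaluation restricted to `C` is a bijection onto `G`. -/
def IsNormalFormSet (ρ : A → G) (C : Set (List A)) : Prop :=
  ∀ g : G, ∃! w : List A, w ∈ C ∧ eval ρ w = g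

/-- The directed edge `(g, a)` of the Cayley graph is degenerate with respect to `C`. -/
def IsDegenerate (ρ : A → G) (ι : A → A) (C : Set (List A)) (e : G × A) : Prop :=
  ∃ y₁ y₂ : List A, y₁ ∈ C ∧ eval ρ y₁ = e.1 ∧ y₂ ∈ C ∧ eval ρ y₂ = e.1 * ρ e.2 ∧
    (y₁ ++ [e.2] = y₂ ∨ y₁ = y₂ ++ [ι e.2])

/-- A non-degenerate edge is recursive. -/
def IsRecursive (ρ : A → G) (ι : A → A) (C : Set (List A)) (e : G × A) : Prop :=
  ¬ IsDegenerate ρ ι C e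

/-- `e` is one of the edges along the path starting at `g` labeled by the word `w`. -/
def EdgeOnPath (ρ : A → G) (g : G) (w : List A) (e : G × A) : Prop :=
  ∃ i : Fin w.length, e = (g * eval ρ (w.take i), w.get i)

/-- A stackable structure for `(G, A)`: a normal form set `C` containing the empty word,
a well-founded strict partial order `lt` on the recursive edges, and a constant `k`,
such that each edge `(g, a)` admits a word of length at most `k` evaluating to `ρ a`,
each of whose edges along the path from `g` is degenerate or recursive and `lt`-below
`(g, a)`. -/
def IsStackableStructure (ρ : A → G) (ι : A → A) (C : Set (List A))
    (lt : G × A → G × A → Prop) (k : ℕ) : Prop :=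
  ([] : List A) ∈ C ∧ IsNormalFormSet ρ C ∧
  (∀ e e' : G × A, lt e e' → IsRecursive ρ ι C e ∧ IsRecursive ρ ι C e') ∧
  Transitive lt ∧ WellFounded lt ∧
  ∀ g : G, ∀ a : A, ∃ w : List A, w.length ≤ k ∧ eval ρ w = ρ a ∧
    ∀ e' : G × A, EdgeOnPath ρ g w e' → IsDegenerate ρ ι C e' ∨ lt e' (g, a)

/-- The pair `(G, A)` is stackable. -/
def IsStackable (ρ : A → G) (ι : A → A) : Prop :=
  ∃ (C : Set (List A)) (lt : G × A → G × A → Prop) (k : ℕ),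
    IsStackableStructure ρ ι C lt k

/-- A stacking map for a stackable structure. -/
def IsStackingMap (ρ : A → G) (ι : A → A) (C : Set (List A))
    (lt : G × A → G × A → Prop) (k : ℕ) (Φ : G × A → List A) : Prop :=
  ∀ e : G × A, IsRecursive ρ ι C e →
    eval ρ (Φ e) = ρ e.2 ∧ (Φ e).length ≤ k ∧
    ∀ e' : G × A, EdgeOnPath ρ e.1 (Φ e) e' → IsDegenerate ρ ι C e' ∨ lt e' e

/-- A stacking map extended by `Φ (g, a) = [a]` on degenerate edges. -/
def IsExtendedStackingMap (ρ : A → G) (ι : A → A) (C : Set (List A))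
    (lt : G × A → G × A → Prop) (k : ℕ) (Φ : G × A → List A) : Prop :=
  (∀ e : G × A, IsDegenerate ρ ι C e → Φ e = [e.2]) ∧ IsStackingMap ρ ι C lt k Φ

/-- A word is freely reduced if no letter is followed by its formal inverse. -/
def FreelyReduced (ι : A → A) (w : List A) : Prop :=
  List.Chain' (fun a b => b ≠ ι a) w


/-- The canonical `Primcodable` encoding of a finite type with decidable equality. -/
noncomputable instance (priority := 100) primcodableOfFintype {B : Type*} [Fintype B] [DecidableEq B] :
    Primcodable B :=
  Primcodable.ofEquiv (Fin (Fintype.card B)) (Fintype.equivFin B)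

/-!
Run a machine on pairs `(y, u)`, where `y` is a word all of whose prefixes are normal forms and `u`
is the input still to be read. If `a` is the next letter and the edge `(eval y, a)` is degenerate,
then `a` is appended to `y` or cancels its last letter; otherwise `a` is replaced by
`Φ (eval y, a)` at the front of `u`. The element represented by `y ++ u` never changes, and the
well-founded order on recursive edges makes every run stop, with `u` empty and `y` in normal form.
The machine recognizes degenerate edges by the test `Φ (g, a) = [a]`: a recursive edge cannot pass
it, since it would lie on its own path and so be smaller than itself.
-/

open StateTransition (Reaches)

section Computability

variable {α σ : Type*} [Primcodable α] [Primcodable σ]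

theorem computable_of_computablePred_graph {f : α → σ}
    (hf : ComputablePred fun x : α × σ => x.2 = f x.1) : Computable f := by
  classical
  let search (a : α) (n : ℕ) : Option σ :=
    (Encodable.decode (α := σ) n).bind fun b => cond (decide (b = f a)) (some b) none
  have eq_of_mem {a n b} (h : b ∈ search a n) : b = f a := by
    obtain ⟨c, -, hc⟩ := Option.bind_eq_some_iff.1 h
    by_cases hca : c = f a <;> simp_all
  have htest : Computable fun q : (α × ℕ) × σ => decide (q.2 = f q.1.1) :=
    hf.decide.comp (g := fun q : (α × ℕ) × σ => (q.1.1, q.2))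
      ((Computable.fst.comp .fst).pair .snd)
  have hguard : Computable₂ fun (p : α × ℕ) (b : σ) => cond (decide (b = f p.1)) (some b) none :=
    Computable.cond htest (Computable.option_some.comp .snd) (.const none)
  have hsearch : Computable₂ search :=
    Computable.option_bind (Computable.decode.comp .snd) hguard
  refine (Partrec.rfindOpt hsearch).of_eq_tot fun a => ?_
  have hdom : (Nat.rfindOpt (search a)).Dom :=
    Nat.rfindOpt_dom.2 ⟨Encodable.encode (f a), f a, by simp [search]⟩
  obtain ⟨n, hn⟩ := Nat.rfindOpt_spec (Part.get_mem hdom)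
  exact eq_of_mem hn ▸ Part.get_mem hdom

theorem partrec_stateTransition_eval {step : σ → Option σ} (hstep : Computable step) :
    Partrec (StateTransition.eval step) := by
  have h : Computable fun s => Option.casesOn (motive := fun _ => σ ⊕ σ) (step s) (Sum.inl s)
      Sum.inr :=
    Computable.option_casesOn hstep Computable.sumInl (Computable.sumInr.comp .snd)
  refine Partrec.fix (h.of_eq (g := fun s => (step s).elim (Sum.inl s) Sum.inr) fun s => ?_)
  cases step s <;> rfl

end Computability

section Words

variable (ρ : A → G)

@[simp] theorem eval_nil : eval ρ [] = 1 := rfl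

@[simp] theorem eval_cons (a : A) (w : List A) : eval ρ (a :: w) = ρ a * eval ρ w := by
  simp [eval]

@[simp] theorem eval_append (v w : List A) : eval ρ (v ++ w) = eval ρ v * eval ρ w := by
  simp [eval]

theorem edgeOnPath_cons {g : G} {a : A} {w : List A} {e : G × A} :
    EdgeOnPath ρ g (a :: w) e ↔ e = (g, a) ∨ EdgeOnPath ρ (g * ρ a) w e := by
  simp [EdgeOnPath, Fin.exists_fin_succ, mul_assoc]

end Words

/-- The words all of whose prefixes lie in `C`. The partial outputs of the normalization machine are
of this kind, so that cancelling their last letter never leaves `C`. -/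
def prefixCore (C : Set (List A)) : Set (List A) := {y | ∀ x, x <+: y → x ∈ C}

theorem prefixCore_subset {C : Set (List A)} : prefixCore C ⊆ C := fun y hy => hy y List.prefix_rfl

section ReducedConcat

variable [DecidableEq A] {ρ : A → G} {ι : A → A} {C : Set (List A)} {y : List A} {a : A}

/-- Multiplication of a word by a letter on the right, followed by one free reduction if the letter
is the formal inverse of the last letter of the word. -/
def reducedConcat (ι : A → A) (y : List A) (a : A) : List A :=
  if y.getLast? = some (ι a) then y.dropLast else y ++ [a]

theorem eval_reducedConcat (hρι : ∀ a, ρ (ι a) = (ρ a)⁻¹) :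
    eval ρ (reducedConcat ι y a) = eval ρ y * ρ a := by
  unfold reducedConcat
  split_ifs with hlast
  · obtain ⟨x, rfl⟩ := List.getLast?_eq_some_iff.1 hlast
    simp [hρι]
  · simp

theorem reducedConcat_mem_prefixCore (hC : IsNormalFormSet ρ C) (hy : y ∈ prefixCore C)
    (hdeg : IsDegenerate ρ ι C (eval ρ y, a)) : reducedConcat ι y a ∈ prefixCore C := by
  intro x hx
  unfold reducedConcat at hx
  split_ifs at hx with hlast
  · exact hy x (hx.trans y.dropLast_prefix)
  · rcases List.prefix_concat_iff.1 hx with rfl | hx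
    · obtain ⟨y₁, y₂, hy₁, hev₁, hy₂, -, hconcat⟩ := hdeg
      dsimp only at hev₁ hconcat
      obtain rfl : y₁ = y := (hC (eval ρ y)).unique ⟨hy₁, hev₁⟩ ⟨prefixCore_subset hy, rfl⟩
      rcases hconcat with rfl | rfl
      · exact hy₂
      · simp at hlast
    · exact hy x hx

end ReducedConcat

/-- Flow functions, i.e. extended stacking maps without a bound on the length of the words `Φ e`.
Instead of carrying an order on the recursive edges, the definition asks for well-foundedness of the
least relation such an order must contain: being an edge of the path that `Φ` assigns to an edge. -/
structure IsFlowFunction (ρ : A → G) (ι : A → A) (C : Set (List A)) (Φ : G × A → List A) :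
    Prop where
  eval_apply : ∀ e, eval ρ (Φ e) = ρ e.2
  apply_of_isDegenerate : ∀ e, IsDegenerate ρ ι C e → Φ e = [e.2]
  wellFounded : WellFounded fun e' e : G × A =>
    IsRecursive ρ ι C e' ∧ IsRecursive ρ ι C e ∧ EdgeOnPath ρ e.1 (Φ e) e'

section FlowFunction

variable {ρ : A → G} {ι : A → A} {C : Set (List A)} {Φ : G × A → List A}

theorem IsExtendedStackingMap.isFlowFunction {lt : G × A → G × A → Prop} {k : ℕ}
    (hΦ : IsExtendedStackingMap ρ ι C lt k Φ) (hlt : WellFounded lt) :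
    IsFlowFunction ρ ι C Φ where
  eval_apply e := by
    by_cases he : IsDegenerate ρ ι C e
    · simp [hΦ.1 e he]
    · exact (hΦ.2 e he).1
  apply_of_isDegenerate := hΦ.1
  wellFounded := Subrelation.wf
    (fun {e' e} ⟨he', he, hpath⟩ => ((hΦ.2 e he).2.2 e' hpath).resolve_left he') hlt

theorem IsFlowFunction.apply_eq_singleton_iff (hΦ : IsFlowFunction ρ ι C Φ) {e : G × A} :
    Φ e = [e.2] ↔ IsDegenerate ρ ι C e := by
  refine ⟨fun h => ?_, hΦ.apply_of_isDegenerate e⟩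
  by_contra he
  have hself : EdgeOnPath ρ e.1 (Φ e) e := h ▸ (edgeOnPath_cons ρ).2 (.inl rfl)
  exact hΦ.wellFounded.irrefl.irrefl e ⟨he, he, hself⟩

end FlowFunction

section FlowStep

variable [DecidableEq A]

/-- One step of the normalization machine on a state `(y, u)`, where `y` is the output so far and
`u` the input not yet read. The machine halts when the input is empty. -/
def flowStep (ρ : A → G) (ι : A → A) (Φ : G × A → List A) :
    List A × List A → Option (List A × List A)
  | (_, []) => none
  | (y, a :: u) =>
    if Φ (eval ρ y, a) = [a] then some (reducedConcat ι y a, u)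
    else some (y, Φ (eval ρ y, a) ++ u)

/-- Started on any output `y` with all prefixes in `C` that represents `g`, the machine reads off
the input `w`, ending with such an output for `g * eval ρ w` and leaving later input untouched. -/
def Normalizes (ρ : A → G) (ι : A → A) (C : Set (List A)) (Φ : G × A → List A) (g : G)
    (w : List A) : Prop :=
  ∀ y ∈ prefixCore C, eval ρ y = g → ∀ u, ∃ z ∈ prefixCore C,
    eval ρ z = g * eval ρ w ∧ Reaches (flowStep ρ ι Φ) (y, w ++ u) (z, u)

variable {ρ : A → G} {ι : A → A} {C : Set (List A)} {Φ : G × A → List A} {g : G}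

theorem normalizes_nil : Normalizes ρ ι C Φ g [] :=
  fun y hy hyg _ => ⟨y, hy, by simp [hyg], .refl⟩

theorem Normalizes.append {v w : List A} (hv : Normalizes ρ ι C Φ g v)
    (hw : Normalizes ρ ι C Φ (g * eval ρ v) w) : Normalizes ρ ι C Φ g (v ++ w) := by
  intro y hy hyg u
  obtain ⟨x, hx, hxg, hyx⟩ := hv y hy hyg (w ++ u)
  obtain ⟨z, hz, hzg, hxz⟩ := hw x hx hxg u
  exact ⟨z, hz, by simp [hzg, mul_assoc], by rw [List.append_assoc]; exact hyx.trans hxz⟩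

theorem normalizes_of_forall_edgeOnPath {w : List A}
    (h : ∀ e, EdgeOnPath ρ g w e → Normalizes ρ ι C Φ e.1 [e.2]) : Normalizes ρ ι C Φ g w := by
  induction w generalizing g with
  | nil => exact normalizes_nil
  | cons a w ih =>
    have hhead : Normalizes ρ ι C Φ g [a] := h (g, a) ((edgeOnPath_cons ρ).2 (.inl rfl))
    have htail : Normalizes ρ ι C Φ (g * ρ a) w :=
      ih fun e he => h e ((edgeOnPath_cons ρ).2 (.inr he))
    exact hhead.append (by simpa using htail)

theorem IsFlowFunction.normalizes_singleton_of_isDegenerate (hΦ : IsFlowFunction ρ ι C Φ)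
    (hρι : ∀ a, ρ (ι a) = (ρ a)⁻¹) (hC : IsNormalFormSet ρ C) {a : A}
    (ha : IsDegenerate ρ ι C (g, a)) : Normalizes ρ ι C Φ g [a] := by
  rintro y hy rfl u
  have hstep : flowStep ρ ι Φ (y, a :: u) = some (reducedConcat ι y a, u) :=
    if_pos (hΦ.apply_of_isDegenerate _ ha)
  exact ⟨reducedConcat ι y a, reducedConcat_mem_prefixCore hC hy ha,
    by simp [eval_reducedConcat hρι], .single hstep⟩

theorem IsFlowFunction.normalizes_singleton_of_isRecursive (hΦ : IsFlowFunction ρ ι C Φ) {a : A}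
    (ha : IsRecursive ρ ι C (g, a)) (hnorm : Normalizes ρ ι C Φ g (Φ (g, a))) :
    Normalizes ρ ι C Φ g [a] := by
  rintro y hy rfl u
  have hstep : flowStep ρ ι Φ (y, a :: u) = some (y, Φ (eval ρ y, a) ++ u) :=
    if_neg (hΦ.apply_eq_singleton_iff.not.2 ha)
  obtain ⟨z, hz, hev, hreach⟩ := hnorm y hy rfl u
  exact ⟨z, hz, by simp [hev, hΦ.eval_apply], hreach.head hstep⟩

theorem IsFlowFunction.normalizes_singleton (hΦ : IsFlowFunction ρ ι C Φ)
    (hρι : ∀ a, ρ (ι a) = (ρ a)⁻¹) (hC : IsNormalFormSet ρ C) (e : G × A) :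
    Normalizes ρ ι C Φ e.1 [e.2] := by
  induction e using hΦ.wellFounded.induction with
  | _ e ih =>
    by_cases he : IsDegenerate ρ ι C e
    · exact hΦ.normalizes_singleton_of_isDegenerate hρι hC he
    · refine hΦ.normalizes_singleton_of_isRecursive he
        (normalizes_of_forall_edgeOnPath fun e' hpath => ?_)
      by_cases he' : IsDegenerate ρ ι C e'
      · exact hΦ.normalizes_singleton_of_isDegenerate hρι hC he'
      · exact ih e' ⟨he', he, hpath⟩

theorem IsFlowFunction.exists_mem_eval_flowStep (hΦ : IsFlowFunction ρ ι C Φ)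
    (hρι : ∀ a, ρ (ι a) = (ρ a)⁻¹) (hC : IsNormalFormSet ρ C) (hnil : [] ∈ C) (w : List A) :
    ∃ z ∈ C, eval ρ z = eval ρ w ∧
      (z, []) ∈ StateTransition.eval (flowStep ρ ι Φ) ([], w) := by
  have hnorm : Normalizes ρ ι C Φ 1 w :=
    normalizes_of_forall_edgeOnPath fun e _ => hΦ.normalizes_singleton hρι hC e
  have hnil' : [] ∈ prefixCore C := fun x hx => List.prefix_nil.1 hx ▸ hnil
  obtain ⟨z, hz, hev, hreach⟩ := hnorm [] hnil' rfl []
  exact ⟨z, prefixCore_subset hz, by simpa using hev,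
    StateTransition.mem_eval.2 ⟨by simpa using hreach, rfl⟩⟩

theorem computable_reducedConcat [Primcodable A] (hι : Computable ι) :
    Computable₂ (reducedConcat ι) := by
  have hlast : Computable fun p : List A × A => p.1.getLast? :=
    (Primrec.list_head?.comp (Primrec.list_reverse.comp .fst)).to_comp.of_eq fun p => by simp
  have hdropLast : Computable fun p : List A × A => p.1.dropLast :=
    (Primrec.list_reverse.comp (Primrec.list_tail.comp
      (Primrec.list_reverse.comp .fst))).to_comp.of_eq fun p => by simp
  have htest : Computable fun p : List A × A => decide (p.1.getLast? = some (ι p.2)) :=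
    Primrec.eq.decide.to_comp.comp hlast (Computable.option_some.comp (hι.comp .snd))
  exact (Computable.cond htest hdropLast Computable.list_concat).of_eq fun p => by
    simp [reducedConcat, Bool.cond_decide]

theorem computable_flowStep [Primcodable A] (hι : Computable ι)
    (hΦ : Computable fun x : List A × A => Φ (eval ρ x.1, x.2)) :
    Computable (flowStep ρ ι Φ) := by
  have hy : Computable fun q : (List A × List A) × A => q.1.1 := Computable.fst.comp .fst
  have hu : Computable fun q : (List A × List A) × A => q.1.2.tail :=
    Primrec.list_tail.to_comp.comp (Computable.snd.comp .fst)
  have hΦq : Computable fun q : (List A × List A) × A => Φ (eval ρ q.1.1, q.2) :=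
    hΦ.comp (g := fun q : (List A × List A) × A => (q.1.1, q.2)) (hy.pair .snd)
  have htest : Computable fun q : (List A × List A) × A => decide (Φ (eval ρ q.1.1, q.2) = [q.2]) :=
    Primrec.eq.decide.to_comp.comp hΦq (Computable.list_cons.comp .snd (.const []))
  have hread : Computable₂ fun (s : List A × List A) (a : A) =>
      cond (decide (Φ (eval ρ s.1, a) = [a])) (some (reducedConcat ι s.1 a, s.2.tail))
        (some (s.1, Φ (eval ρ s.1, a) ++ s.2.tail)) :=
    Computable.cond htest
      (Computable.option_some.comp (((computable_reducedConcat hι).comp hy .snd).pair hu))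
      (Computable.option_some.comp (hy.pair (Computable.list_append.comp hΦq hu)))
  refine (Computable.option_bind (Primrec.list_head?.to_comp.comp .snd) hread).of_eq ?_
  rintro ⟨y, _ | ⟨a, u⟩⟩
  · rfl
  · simp [flowStep, Bool.cond_decide]

end FlowStep

theorem normalForm_computable_of_algorithmically_stackable_general [Primcodable A]
    (ρ : A → G) (ι : A → A) (hι : Computable ι) (hρι : ∀ a : A, ρ (ι a) = (ρ a)⁻¹)
    (C : Set (List A)) (hnil : [] ∈ C) (hC : IsNormalFormSet ρ C)
    (Φ : G × A → List A) (hΦ : IsFlowFunction ρ ι C Φ)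
    (hS : ComputablePred (fun x : List A × A × List A => x.2.2 = Φ (eval ρ x.1, x.2.1))) :
    ∃ f : List A → List A, Computable f ∧
      ∀ w : List A, f w ∈ C ∧ eval ρ (f w) = eval ρ w := by
  classical
  have hΦ_comp : Computable fun x : List A × A => Φ (eval ρ x.1, x.2) := by
    have hassoc : Computable fun x : (List A × A) × List A => (x.1.1, x.1.2, x.2) :=
      (Computable.fst.comp .fst).pair ((Computable.snd.comp .fst).pair .snd)
    exact computable_of_computablePred_graph
      (ComputablePred.computable_of_manyOneReducible ⟨_, hassoc, fun _ => Iff.rfl⟩ hS)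
  choose f hfC hf_eval hf_run using hΦ.exists_mem_eval_flowStep hρι hC hnil
  have hrun : Computable fun w => (f w, ([] : List A)) :=
    ((partrec_stateTransition_eval (computable_flowStep hι hΦ_comp)).comp
      ((Computable.const []).pair .id)).of_eq_tot hf_run
  exact ⟨f, Computable.fst.comp hrun, fun w => ⟨hfC w, hf_eval w⟩⟩

/-- for an algorithmically stackable group the normal form function is
computable. -/
theorem normalForm_computable_of_algorithmically_stackable {G : Type*} [Group G]
    {A : Type*} [Fintype A] [DecidableEq A]
    (ρ : A → G) (ι : A → A)
    (hgen : Subgroup.closure (Set.range ρ) = ⊤)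
    (hne : ∀ a : A, ρ a ≠ 1)
    (hinv : Function.Involutive ι)
    (hρι : ∀ a : A, ρ (ι a) = (ρ a)⁻¹)
    (C : Set (List A)) (lt : G × A → G × A → Prop) (k : ℕ)
    (hstk : IsStackableStructure ρ ι C lt k)
    (Φ : G × A → List A) (hΦ : IsExtendedStackingMap ρ ι C lt k Φ)
    (hS : ComputablePred (fun x : List A × A × List A => x.2.2 = Φ (eval ρ x.1, x.2.1))) :
    ∃ f : List A → List A, Computable f ∧
      ∀ w : List A, f w ∈ C ∧ eval ρ (f w) = eval ρ w := by
  obtain ⟨hnil, hC, -, -, hlt, -⟩ := hstk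
  exact normalForm_computable_of_algorithmically_stackable_general ρ ι
    (Primrec.dom_finite ι).to_comp hρι C hnil hC Φ (hΦ.isFlowFunction hlt) hS

end Stk
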